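/- Let M be a convex subset of ℂ, let t, k be natural numbers, and let z₁ ≠ z₂ be Gaussian integers such that z₁/√(5^t) ∈ M and z₂/√(5^t) ∈ M. Then there exist at least 5^k + 1 distinct Gaussian integers u such that u/√(5^{t+2k}) ∈ M. In particular, if the set of complex numbers of the form u/√(5^t) (u a Gaussian integer) lying in M has at least 2 elements, then for every k ≥ 0 the set of complex numbers of the form u/√(5^{t+2k}) lying in M has at least 1 + 5^k elements. -/

import Mathlib

/-- A Gaussian integer: a complex number with integer real and imaginary parts. -/
def IsGaussian (z : ℂ) : Prop := ∃ a b : ℤ, z = (a : ℂ) + (b : ℂ) * Complex.I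

/-!
If `i + j = n`, then `i • x + j • y`, scaled by `1 / n`, is the convex combination of `x` and `y`
with weights `i / n` and `j / n`. For lattice points `x ≠ y`, the `n + 1` pairs `(i, j)` thus give
`n + 1` lattice points whose scalings lie on the segment from `x` to `y`. Going from level `t` to
level `t + 2 * k` multiplies the denominator by `n = 5 ^ k`.
-/

section Subdivision

open Finset

variable {E : Type*}

open Classical in
/-- The `n + 1` points dividing the segment from `n • x` to `n • y` into `n` equal parts. They are
written as `i • x + j • y` with `i + j = n`, so that every additive submonoid containing `x` and `y`
visibly contains them. -/
noncomputable def subdivision [AddCommMonoid E] (n : ℕ) (x y : E) : Finset E :=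
  (antidiagonal n).image fun p ↦ p.1 • x + p.2 • y

theorem mem_subdivision [AddCommMonoid E] {n : ℕ} {x y u : E} :
    u ∈ subdivision n x y ↔ ∃ i j : ℕ, i + j = n ∧ i • x + j • y = u := by
  simp [subdivision]

theorem mem_of_mem_subdivision [AddCommMonoid E] {S : Type*} [SetLike S E] [AddSubmonoidClass S E]
    {L : S} {n : ℕ} {x y u : E} (hx : x ∈ L) (hy : y ∈ L) (hu : u ∈ subdivision n x y) :
    u ∈ L := by
  obtain ⟨i, j, -, rfl⟩ := mem_subdivision.1 hu
  exact add_mem (nsmul_mem hx i) (nsmul_mem hy j)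

theorem card_subdivision [AddCommGroup E] [IsAddTorsionFree E] (n : ℕ) {x y : E} (hxy : x ≠ y) :
    (subdivision n x y).card = n + 1 := by
  classical
  rw [subdivision, card_image_of_injOn, Nat.card_antidiagonal]
  rintro ⟨i, j⟩ hij ⟨i', j'⟩ hij' h
  rw [mem_coe, HasAntidiagonal.mem_antidiagonal] at hij hij'
  have expand (i j : ℕ) (hij : i + j = n) : i • x + j • y = n • x + j • (y - x) := by
    rw [← hij, add_nsmul, nsmul_sub]; abel
  simp only [expand i j hij, expand i' j' hij', add_right_inj] at h
  have hj : j = j' := (IsAddLeftRegular.all _).nsmul_injective (sub_ne_zero.2 hxy.symm) h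
  have hi : i = i' := by lia
  rw [hi, hj]

theorem smul_mem_of_mem_subdivision {𝕜 : Type*} [Field 𝕜] [LinearOrder 𝕜] [IsStrictOrderedRing 𝕜]
    [AddCommGroup E] [Module 𝕜 E] {M : Set E} (hM : Convex 𝕜 M) {n : ℕ} (hn : n ≠ 0) {r : 𝕜}
    {x y u : E} (hx : r • x ∈ M) (hy : r • y ∈ M) (hu : u ∈ subdivision n x y) :
    (r / n) • u ∈ M := by
  obtain ⟨i, j, rfl, rfl⟩ := mem_subdivision.1 hu
  have hpos : (0 : 𝕜) < i + j := by exact_mod_cast Nat.pos_of_ne_zero hn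
  have convex_comb : (r / ↑(i + j)) • (i • x + j • y) =
      ((i : 𝕜) / (i + j)) • r • x + ((j : 𝕜) / (i + j)) • r • y := by
    push_cast
    module
  rw [convex_comb]
  exact convex_iff_div.1 hM hx hy i.cast_nonneg j.cast_nonneg hpos

end Subdivision

theorem isGaussian_iff_mem_range_toComplex {z : ℂ} :
    IsGaussian z ↔ z ∈ GaussianInt.toComplex.range := by
  simp only [IsGaussian, RingHom.mem_range, GaussianInt.toComplex_def]
  exact ⟨fun ⟨a, b, h⟩ ↦ ⟨⟨a, b⟩, h.symm⟩, fun ⟨w, h⟩ ↦ ⟨w.re, w.im, h.symm⟩⟩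

theorem div_ofReal_eq_inv_smul (z : ℂ) (r : ℝ) : z / (r : ℂ) = r⁻¹ • z := by
  rw [Complex.real_smul, Complex.ofReal_inv, div_eq_inv_mul]

theorem sqrt_pow_add_two_mul {b : ℝ} (hb : 0 ≤ b) (t k : ℕ) :
    √(b ^ (t + 2 * k)) = √(b ^ t) * b ^ k := by
  rw [pow_add, mul_comm 2 k, pow_mul, Real.sqrt_mul (pow_nonneg hb t),
    Real.sqrt_sq (pow_nonneg hb k)]

theorem stmt15_general {𝕜 E S : Type*} [Field 𝕜] [LinearOrder 𝕜] [IsStrictOrderedRing 𝕜]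
    [AddCommGroup E] [Module 𝕜 E] [SetLike S E] [AddSubmonoidClass S E] (L : S) {M : Set E}
    (hM : Convex 𝕜 M) {n : ℕ} (hn : n ≠ 0) {r : 𝕜} {x y : E} (hx : x ∈ L) (hy : y ∈ L)
    (hxy : x ≠ y) (hrx : r • x ∈ M) (hry : r • y ∈ M) :
    ∃ T : Finset E, T.card = n + 1 ∧ ∀ u ∈ T, u ∈ L ∧ (r / n) • u ∈ M :=
  have : IsAddTorsionFree E := .of_isTorsionFree 𝕜 E
  ⟨subdivision n x y, card_subdivision n hxy, fun _ hu ↦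
    ⟨mem_of_mem_subdivision hx hy hu, smul_mem_of_mem_subdivision hM hn hrx hry hu⟩⟩

/-- If a convex set `M ⊆ ℂ` contains two distinct candidates of level `t`
(points `z/√(5^t)` with `z` a Gaussian integer), then it contains at least
`5^k + 1` distinct candidates of level `t + 2k`. -/
theorem stmt15 (M : Set ℂ) (hM : Convex ℝ M) (t k : ℕ)
    (z₁ z₂ : ℂ) (hz₁ : IsGaussian z₁) (hz₂ : IsGaussian z₂) (hne : z₁ ≠ z₂)
    (hm₁ : z₁ / ((Real.sqrt (5 ^ t) : ℝ) : ℂ) ∈ M)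
    (hm₂ : z₂ / ((Real.sqrt (5 ^ t) : ℝ) : ℂ) ∈ M) :
    ∃ S : Finset ℂ, S.card = 5 ^ k + 1 ∧
      ∀ u ∈ S, IsGaussian u ∧ u / ((Real.sqrt (5 ^ (t + 2 * k)) : ℝ) : ℂ) ∈ M := by
  simp only [isGaussian_iff_mem_range_toComplex, div_ofReal_eq_inv_smul,
    sqrt_pow_add_two_mul (by norm_num : (0 : ℝ) ≤ 5), mul_inv] at *
  exact_mod_cast stmt15_general GaussianInt.toComplex.range hM (n := 5 ^ k) (by positivity)
    hz₁ hz₂ hne hm₁ hm₂
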